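/- arXiv:1907.08660 — 2 statements merged into one kernel-verified Lean document; each statement's English description precedes it below -/
import Mathlib

section
/- Let D ⊂ ℝ^d be a bounded measurable set, let 1 ≤ q < ∞, let −∞ = c_0 < c_1 < ⋯ < c_{n−1} < c_n = ∞ be constants and w_1, …, w_n positive constants with w_l ≠ w_{l+1} for some l, and define the level set map 𝒢 by 𝒢(φ) = Σ_{l=1}^n w_l · 1_{{x ∈ D : c_{l−1} ≤ φ(x) < c_l}}. If φ is a continuous function such that the Lebesgue measure of the level set {x ∈ D : φ(x) = c_l} is strictly positive for some l ∈ {1, …, n−1} with w_l ≠ w_{l+1}, then 𝒢 is not continuous at φ in the L^q(D) topology: there exists a sequence φ_k converging uniformly to φ such that 𝒢(φ_k) does not converge to 𝒢(φ) in L^q(D). -/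
/-!
On `D` the level set map is the superposition operator `φ ↦ g ∘ φ` of a step function `g` on the
line, and `g` jumps at `a = c_l`: its left limit is `w_l`, its value is `w_{l+1}`. If `φ = a` on a
set `A` of positive measure and `ε_k ↓ 0`, then `φ - ε_k` approaches `a` from the left on all of `A`
simultaneously, so `g ∘ (φ - ε_k) - g ∘ φ` stays away from `0` there.
-/

open MeasureTheory Filter Topology

/-- The level set map `𝒢` determined by thresholds
`−∞ = c_0 < c_1 < ⋯ < c_n = ∞` (encoded as `c : Fin (n+1) → EReal`) and weights
`w_1, …, w_n`: `𝒢(φ)(x) = ∑_{l=1}^n w_l · 1_{{x ∈ D : c_{l−1} ≤ φ(x) < c_l}}(x)`. -/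
noncomputable def levelSetMap (d n : ℕ) (D : Set (EuclideanSpace ℝ (Fin d)))
    (c : Fin (n + 1) → EReal) (w : Fin n → ℝ)
    (φ : EuclideanSpace ℝ (Fin d) → ℝ) : EuclideanSpace ℝ (Fin d) → ℝ := fun x =>
  ∑ l : Fin n, w l *
    Set.indicator {y | y ∈ D ∧ c l.castSucc ≤ (φ y : EReal) ∧ (φ y : EReal) < c l.succ}
      (fun _ => (1 : ℝ)) x

theorem not_tendsto_eLpNorm_zero_of_frequently_le_enorm {ι X E : Type*} [MeasurableSpace X]
    [TopologicalSpace E] [ContinuousENorm E] {μ : Measure X} {p : ENNReal} (hp : p ≠ 0)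
    {l : Filter ι} {f : ι → X → E} {A : Set X} (hA : μ A ≠ 0) {r : ENNReal} (hr : r ≠ 0)
    (hf : ∃ᶠ k in l, ∀ᵐ x ∂μ.restrict A, r ≤ ‖f k x‖ₑ) :
    ¬ Tendsto (fun k => eLpNorm (f k) p μ) l (𝓝 0) := by
  have hpos : 0 < eLpNorm (fun _ : X => r) p (μ.restrict A) := by
    rw [eLpNorm_const r hp (by rwa [Ne, Measure.restrict_eq_zero]), enorm_eq_self,
      Measure.restrict_apply_univ]
    have hpow : μ A ^ (1 / p.toReal) ≠ 0 := by
      simp [ENNReal.rpow_eq_zero_iff, hA, ENNReal.toReal_nonneg]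
    exact ENNReal.mul_pos hr hpow
  intro hlim
  obtain ⟨k, hk, hlt⟩ := (hf.and_eventually (hlim.eventually_lt_const hpos)).exists
  refine hlt.not_ge ?_
  calc eLpNorm (fun _ : X => r) p (μ.restrict A)
      ≤ eLpNorm (f k) p (μ.restrict A) := eLpNorm_mono_enorm_ae hk
    _ ≤ eLpNorm (f k) p μ := eLpNorm_restrict_le _ _ _ _

theorem not_tendsto_eLpNorm_comp_sub_of_tendsto_nhdsLT {ι X E : Type*} [MeasurableSpace X]
    [NormedAddCommGroup E] {μ : Measure X} {p : ENNReal} (hp : p ≠ 0) {l : Filter ι} [l.NeBot]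
    {g : ℝ → E} {a : ℝ} {b : E} (hg : Tendsto g (𝓝[<] a) (𝓝 b)) (hb : b ≠ g a)
    {φ : X → ℝ} (hφ : NullMeasurableSet (φ ⁻¹' {a}) μ) (hfat : μ (φ ⁻¹' {a}) ≠ 0)
    {ε : ι → ℝ} (hε : Tendsto ε l (𝓝[>] 0)) :
    ¬ Tendsto (fun k => eLpNorm (fun x => g (φ x - ε k) - g (φ x)) p μ) l (𝓝 0) := by
  have hleft : Tendsto (fun k => a - ε k) l (𝓝[<] a) := by
    rw [tendsto_nhdsWithin_iff] at hε ⊢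
    exact ⟨by simpa using hε.1.const_sub a, hε.2.mono fun k hk => sub_lt_self a hk⟩
  have hjump : Tendsto (fun k => ‖g (a - ε k) - g a‖ₑ) l (𝓝 ‖b - g a‖ₑ) :=
    ((hg.comp hleft).sub_const (g a)).enorm
  obtain ⟨r, hr0, hr⟩ := exists_between (enorm_pos.2 (sub_ne_zero.2 hb))
  refine not_tendsto_eLpNorm_zero_of_frequently_le_enorm hp hfat hr0.ne'
    ((hjump.eventually_const_lt hr).frequently.mono fun k hk => ?_)
  filter_upwards [ae_restrict_mem₀ hφ] with x hx
  rw [show φ x = a from hx]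
  exact hk.le

/-- The step function with value `w l` on `[c l, c (l + 1))`, for `l = 0, …, n - 1`, and `0` off
these intervals; values add up where intervals overlap, which monotone `c` rules out. On `D` the
level set map is composition with it. -/
noncomputable def stepFunction {α M : Type*} [Preorder α] [AddCommMonoid M] {n : ℕ}
    (c : Fin (n + 1) → α) (w : Fin n → M) (t : α) : M :=
  ∑ l : Fin n, (Set.Ico (c l.castSucc) (c l.succ)).indicator (fun _ => w l) t

section stepFunction

variable {α M : Type*} [LinearOrder α] [AddCommMonoid M] {n : ℕ} {c : Fin (n + 1) → α}

theorem stepFunction_eq_of_mem_Ico (hc : Monotone c) (w : Fin n → M) {i : Fin n} {t : α}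
    (ht : t ∈ Set.Ico (c i.castSucc) (c i.succ)) : stepFunction c w t = w i := by
  have hunique : ∀ j ≠ i, t ∉ Set.Ico (c j.castSucc) (c j.succ) := by
    intro j hji hj
    have hij : i.castSucc < j.succ := hc.reflect_lt (ht.1.trans_lt hj.2)
    have hji' : j.castSucc < i.succ := hc.reflect_lt (hj.1.trans_lt ht.2)
    rw [Fin.castSucc_lt_succ_iff] at hij hji'
    exact hji (hji'.antisymm hij)
  rw [stepFunction, Finset.sum_eq_single i
    (fun j _ hji => Set.indicator_of_notMem (hunique j hji) _) (by simp)]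
  exact Set.indicator_of_mem ht _

theorem stepFunction_eventuallyEq_nhdsLT [TopologicalSpace α] [ClosedIicTopology α]
    (hc : StrictMono c) (w : Fin n → M) (i : Fin n) :
    stepFunction c w =ᶠ[𝓝[<] c i.succ] fun _ => w i := by
  filter_upwards [Ico_mem_nhdsLT (hc i.castSucc_lt_succ)] with t ht
  exact stepFunction_eq_of_mem_Ico hc.monotone w ht

end stepFunction

theorem levelSetMap_eq_stepFunction {d n : ℕ} {D : Set (EuclideanSpace ℝ (Fin d))}
    (c : Fin (n + 1) → EReal) (w : Fin n → ℝ) (φ : EuclideanSpace ℝ (Fin d) → ℝ)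
    {x : EuclideanSpace ℝ (Fin d)} (hx : x ∈ D) :
    levelSetMap d n D c w φ x = stepFunction c w (φ x : EReal) := by
  classical
  simp only [levelSetMap, stepFunction, Set.indicator_apply, Set.mem_ofPred_eq, Set.mem_Ico, hx,
    true_and, mul_ite, mul_one, mul_zero]

theorem not_tendsto_eLpNorm_levelSetMap_sub {d n : ℕ} {D : Set (EuclideanSpace ℝ (Fin d))}
    {μ : Measure (EuclideanSpace ℝ (Fin d))} (hD : NullMeasurableSet D μ)
    {p : ENNReal} (hp : p ≠ 0)
    {c : Fin (n + 1) → EReal} (hc : StrictMono c) {w : Fin n → ℝ}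
    {φ : EuclideanSpace ℝ (Fin d) → ℝ} (hφ : AEMeasurable φ (μ.restrict D))
    {i j : Fin n} (hij : i.succ = j.castSucc)
    (hfat : 0 < μ {x | x ∈ D ∧ (φ x : EReal) = c j.castSucc}) (hw : w i ≠ w j)
    {ι : Type*} {l : Filter ι} [l.NeBot] {ε : ι → ℝ} (hε : Tendsto ε l (𝓝[>] 0)) :
    ¬ Tendsto (fun k => eLpNorm (fun x =>
        levelSetMap d n D c w (fun y => φ y - ε k) x - levelSetMap d n D c w φ x)
      p (μ.restrict D)) l (𝓝 0) := by
  obtain ⟨x₀, -, hx₀⟩ := nonempty_of_measure_ne_zero hfat.ne'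
  set a : ℝ := φ x₀
  let g : ℝ → ℝ := fun t => stepFunction c w (t : EReal)
  have hga : g a = w j := stepFunction_eq_of_mem_Ico hc.monotone w
    ⟨hx₀.ge, hx₀.trans_lt (hc j.castSucc_lt_succ)⟩
  have hcoe : Tendsto ((↑) : ℝ → EReal) (𝓝[<] a) (𝓝[<] c i.succ) := by
    rw [hij, ← hx₀]
    exact continuous_coe_real_ereal.continuousWithinAt.tendsto_nhdsWithin
      fun _ => EReal.coe_lt_coe
  have hleft : Tendsto g (𝓝[<] a) (𝓝 (w i)) :=
    tendsto_nhds_of_eventually_eq (hcoe.eventually (stepFunction_eventuallyEq_nhdsLT hc w i))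
  have hlevel : μ.restrict D (φ ⁻¹' {a}) ≠ 0 := by
    refine (hfat.trans_le ((measure_mono ?_).trans (Measure.le_restrict_apply D _))).ne'
    exact fun x ⟨hxD, hx⟩ => ⟨EReal.coe_injective (hx.trans hx₀.symm), hxD⟩
  have hcomp : ∀ k, eLpNorm (fun x =>
        levelSetMap d n D c w (fun y => φ y - ε k) x - levelSetMap d n D c w φ x)
      p (μ.restrict D) = eLpNorm (fun x => g (φ x - ε k) - g (φ x)) p (μ.restrict D) := by
    refine fun k => eLpNorm_congr_ae ?_
    filter_upwards [ae_restrict_mem₀ hD] with x hx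
    simp only [levelSetMap_eq_stepFunction _ _ _ hx, g]
  simpa only [hcomp] using
    not_tendsto_eLpNorm_comp_sub_of_tendsto_nhdsLT hp hleft (hga ▸ hw)
      (hφ.nullMeasurableSet_preimage (measurableSet_singleton a)) hlevel hε

theorem levelSetMap_discontinuous_of_fat_level_set_general
    {d n : ℕ} {D : Set (EuclideanSpace ℝ (Fin d))}
    {μ : Measure (EuclideanSpace ℝ (Fin d))} (hD : NullMeasurableSet D μ)
    {p : ENNReal} (hp : p ≠ 0)
    {c : Fin (n + 1) → EReal} (hc : StrictMono c) {w : Fin n → ℝ}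
    {φ : EuclideanSpace ℝ (Fin d) → ℝ} (hφc : ContinuousOn φ (closure D))
    (hφb : Bornology.IsBounded (φ '' closure D))
    {i j : Fin n} (hij : i.succ = j.castSucc)
    (hfat : 0 < μ {x | x ∈ D ∧ (φ x : EReal) = c j.castSucc}) (hw : w i ≠ w j) :
    ∃ φseq : ℕ → EuclideanSpace ℝ (Fin d) → ℝ,
      (∀ k, ContinuousOn (φseq k) (closure D)) ∧
      (∀ k, Bornology.IsBounded (φseq k '' closure D)) ∧
      TendstoUniformlyOn φseq φ atTop (closure D) ∧
      ¬ Tendsto (fun k => eLpNorm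
          (fun x => levelSetMap d n D c w (φseq k) x - levelSetMap d n D c w φ x)
          p (μ.restrict D))
        atTop (𝓝 0) := by
  obtain ⟨ε, -, -, hε⟩ := exists_seq_strictAnti_tendsto_nhdsWithin (0 : ℝ)
  refine ⟨fun k x => φ x - ε k, fun k => hφc.sub continuousOn_const, fun k => ?_, ?_, ?_⟩
  · simpa only [Set.sub_singleton, Set.image_image] using
      hφb.sub (Bornology.isBounded_singleton (x := ε k))
  · rw [Metric.tendstoUniformlyOn_iff]
    intro δ hδ
    filter_upwards [Metric.tendsto_nhds.1 (hε.mono_right nhdsWithin_le_nhds) δ hδ] with k hk x _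
    rwa [dist_self_sub_right, ← dist_zero_right]
  · have hφ : AEMeasurable φ (μ.restrict D) :=
      (hφc.aemeasurable isClosed_closure.measurableSet).mono_measure
        (Measure.restrict_mono subset_closure le_rfl)
    exact not_tendsto_eLpNorm_levelSetMap_sub hD hp hc hφ hij hfat hw hε

/-- **Discontinuity of the level set map at functions with a fat level set.**
If the Lebesgue measure of `{x ∈ D : φ(x) = c_l}` is strictly positive for some interior
threshold `l ∈ {1, …, n−1}` with `w_l ≠ w_{l+1}`, then the level set map `𝒢` is not
continuous at `φ` in the `L^q(D)` topology: there is a sequence `φ_k` in `C(D̄)`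
converging uniformly to `φ` such that `𝒢(φ_k)` does not converge to `𝒢(φ)` in `L^q(D)`. -/
theorem levelSetMap_discontinuous_of_fat_level_set
    (d n : ℕ) (hn : 0 < n)
    (D : Set (EuclideanSpace ℝ (Fin d)))
    (hD : Bornology.IsBounded D) (hDm : MeasurableSet D)
    (q : ℝ) (hq : 1 ≤ q)
    (c : Fin (n + 1) → EReal) (hc : StrictMono c)
    (hc0 : c 0 = ⊥) (hcn : c (Fin.last n) = ⊤)
    (w : Fin n → ℝ) (hw : ∀ l, 0 < w l)
    (φ : EuclideanSpace ℝ (Fin d) → ℝ)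
    (hφc : ContinuousOn φ (closure D))
    (hφb : Bornology.IsBounded (φ '' closure D))
    (hfat : ∃ l : ℕ, ∃ h1 : 0 < l, ∃ h2 : l < n,
      0 < volume {x | x ∈ D ∧ (φ x : EReal) = c ⟨l, by omega⟩} ∧
        w ⟨l - 1, by omega⟩ ≠ w ⟨l, h2⟩) :
    ∃ φseq : ℕ → EuclideanSpace ℝ (Fin d) → ℝ,
      (∀ k, ContinuousOn (φseq k) (closure D)) ∧
      (∀ k, Bornology.IsBounded (φseq k '' closure D)) ∧
      TendstoUniformlyOn φseq φ atTop (closure D) ∧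
      ¬ Tendsto (fun k => eLpNorm
          (fun x => levelSetMap d n D c w (φseq k) x - levelSetMap d n D c w φ x)
          (ENNReal.ofReal q) (volume.restrict D))
        atTop (𝓝 0) := by
  obtain ⟨l, h1, h2, hvol, hne⟩ := hfat
  exact levelSetMap_discontinuous_of_fat_level_set_general hDm.nullMeasurableSet
    (ENNReal.ofReal_pos.2 (one_pos.trans_le hq)).ne' hc hφc hφb
    (i := ⟨l - 1, by omega⟩) (j := ⟨l, h2⟩) (Fin.ext (Nat.sub_add_cancel h1)) hvol hne
end

section
/- Let D ⊂ ℝ^d be a bounded measurable set with Lebesgue measure 𝔪, let θ_1, …, θ_J ∈ ℝ^d, λ_1, …, λ_J > 0, c ∈ ℝ. Let 𝒯 : ℝ^J → C(D̄) be the map sending a to the function x ↦ Σ_{s=1}^J a_s · exp(−|x − θ_s|²/(2λ_s²)), and let μ_0 be the pushforward under 𝒯 of the standard Gaussian measure N(0, I) on ℝ^J. Then μ_0-almost every φ ∈ C(D̄) satisfies 𝔪({x ∈ D : φ(x) = c}) = 0; that is, μ_0({φ ∈ C(D̄) : 𝔪({x ∈ D : φ(x) = c}) = 0}) = 1. -/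
open MeasureTheory ProbabilityTheory

/-- The parameterization map `𝒯 : ℝ^J → C(D̄)` sending the coefficient vector `a` to the
radial-basis level set function `x ↦ ∑_s a_s · exp(−‖x − θ_s‖²/(2 λ_s²))`, viewed as a
bounded continuous function on the closure of `D`. -/
noncomputable def rbfParamMap (d J : ℕ) (D : Set (EuclideanSpace ℝ (Fin d)))
    (θ : Fin J → EuclideanSpace ℝ (Fin d)) (lam : Fin J → ℝ)
    (a : Fin J → ℝ) : BoundedContinuousFunction (closure D) ℝ where
  toFun := fun y =>
    ∑ s, a s * Real.exp (-‖(y : EuclideanSpace ℝ (Fin d)) - θ s‖ ^ 2 / (2 * lam s ^ 2))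
  continuous_toFun := by fun_prop
  map_bounded' := by
    have key : ∀ z : (closure D : Set (EuclideanSpace ℝ (Fin d))),
        |∑ s, a s * Real.exp (-‖(z : EuclideanSpace ℝ (Fin d)) - θ s‖ ^ 2 / (2 * lam s ^ 2))|
          ≤ ∑ s, |a s| := by
      intro z
      refine (Finset.abs_sum_le_sum_abs _ _).trans (Finset.sum_le_sum fun s _ => ?_)
      rw [abs_mul, abs_of_pos (Real.exp_pos _)]
      have h1 : Real.exp (-‖(z : EuclideanSpace ℝ (Fin d)) - θ s‖ ^ 2 / (2 * lam s ^ 2)) ≤ 1 := by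
        apply Real.exp_le_one_iff.mpr
        apply div_nonpos_of_nonpos_of_nonneg
        · simp only [neg_nonpos]
          positivity
        · positivity
      calc |a s| * Real.exp _ ≤ |a s| * 1 := by
            exact mul_le_mul_of_nonneg_left h1 (abs_nonneg _)
        _ = |a s| := mul_one _
    refine ⟨2 * ∑ s, |a s|, fun x y => ?_⟩
    calc dist _ _ ≤ dist (∑ s, a s * Real.exp
            (-‖(x : EuclideanSpace ℝ (Fin d)) - θ s‖ ^ 2 / (2 * lam s ^ 2))) 0
          + dist 0 (∑ s, a s * Real.exp
            (-‖(y : EuclideanSpace ℝ (Fin d)) - θ s‖ ^ 2 / (2 * lam s ^ 2))) :=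
        dist_triangle _ _ _
      _ ≤ (∑ s, |a s|) + ∑ s, |a s| := by
          rw [dist_zero_right, dist_comm, dist_zero_right]
          exact add_le_add (key x) (key y)
      _ = 2 * ∑ s, |a s| := by ring

/-!
For a fixed point `x`, the equation `∑ s, a s * f s x = c` is a nontrivial affine condition on the
coefficients `a` as soon as some `f s x ≠ 0`; with the other coefficients held fixed, it leaves a
single value of `a s`, so it has probability zero for independent atomless coefficients. By Fubini's
theorem, the random level set then almost surely has measure zero.
-/

section ProductMeasure

variable {ι : Type*} [Fintype ι]

theorem ae_pi_of_forall_ae_update [DecidableEq ι] {X : ι → Type*} [∀ i, MeasurableSpace (X i)]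
    {μ : ∀ i, Measure (X i)} [∀ i, SigmaFinite (μ i)] {P : (∀ i, X i) → Prop}
    (hP : MeasurableSet {x | P x}) (i : ι)
    (h : ∀ x, ∀ᵐ t ∂μ i, P (Function.update x i t)) :
    ∀ᵐ x ∂Measure.pi μ, P x := by
  let bad : (∀ i, X i) → ENNReal := {x | P x}ᶜ.indicator 1
  have hbad : Measurable bad := measurable_one.indicator hP.compl
  have hslice : ∫⋯∫⁻_{i}, bad ∂μ = ∫⋯∫⁻_{i}, 0 ∂μ := by
    rw [lmarginal_singleton, lmarginal_singleton]
    funext x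
    refine lintegral_congr_ae ?_
    filter_upwards [h x] with t ht
    exact Set.indicator_of_notMem (Set.notMem_compl_iff.mpr ht) 1
  calc Measure.pi μ {x | P x}ᶜ
      = ∫⁻ x, bad x ∂Measure.pi μ := (lintegral_indicator_one hP.compl).symm
    _ = ∫⁻ _, 0 ∂Measure.pi μ := lintegral_eq_of_lmarginal_eq {i} hbad measurable_zero hslice
    _ = 0 := lintegral_zero

variable (μ : ι → Measure ℝ) [∀ i, SigmaFinite (μ i)]

theorem ae_pi_sum_mul_ne {p : ι → ℝ} {i : ι} [NullSingletonClass (μ i)] (hi : p i ≠ 0) (c : ℝ) :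
    ∀ᵐ a ∂Measure.pi μ, ∑ j, a j * p j ≠ c := by
  classical
  have hmeas : MeasurableSet {a : ι → ℝ | ∑ j, a j * p j ≠ c} :=
    (isOpen_ne_fun (by fun_prop) (by fun_prop)).measurableSet
  refine ae_pi_of_forall_ae_update hmeas i fun a => ?_
  let rest : ℝ := ∑ j ∈ Finset.univ.erase i, a j * p j
  have hsum (t : ℝ) : ∑ j, Function.update a i t j * p j = t * p i + rest := by
    rw [← Finset.add_sum_erase _ _ (Finset.mem_univ i), Function.update_self]
    congr 1
    refine Finset.sum_congr rfl fun j hj => ?_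
    rw [Function.update_of_ne (Finset.ne_of_mem_erase hj)]
  filter_upwards [Measure.ae_ne (μ i) ((c - rest) / p i)] with t ht hc
  rw [hsum] at hc
  exact ht ((eq_div_iff hi).mpr (eq_sub_of_add_eq hc))

theorem ae_pi_ae_sum_mul_ne [∀ i, NullSingletonClass (μ i)] {X : Type*} [MeasurableSpace X]
    {ν : Measure X} [SFinite ν] {f : ι → X → ℝ} (hf : ∀ i, Measurable (f i))
    (hf₀ : ∀ᵐ x ∂ν, ∃ i, f i x ≠ 0) (c : ℝ) :
    ∀ᵐ a ∂Measure.pi μ, ∀ᵐ x ∂ν, ∑ i, a i * f i x ≠ c := by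
  have hmeas : MeasurableSet {z : (ι → ℝ) × X | ∑ i, z.1 i * f i z.2 ≠ c} :=
    (measurableSet_eq_fun (by fun_prop) measurable_const).compl
  rw [Measure.ae_ae_comm hmeas]
  exact hf₀.mono fun _ ⟨_, hi⟩ => ae_pi_sum_mul_ne μ hi c

end ProductMeasure

theorem sFinite_comap_of_measurableEmbedding {X Y : Type*} [MeasurableSpace X]
    [MeasurableSpace Y] {g : X → Y} (hg : MeasurableEmbedding g) (ν : Measure Y) [SFinite ν] :
    SFinite (ν.comap g) := by
  have hsum : ν.comap g = Measure.sum fun n => (sfiniteSeq ν n).comap g := by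
    ext s hs
    rw [hg.comap_apply, Measure.sum_apply _ hs]
    conv_lhs => rw [← sum_sfiniteSeq ν, Measure.sum_apply _ (hg.measurableSet_image.mpr hs)]
    exact tsum_congr fun n => (hg.comap_apply _ _).symm
  rw [hsum]
  infer_instance

theorem map_apply_eq_one_of_ae_mem {X Y : Type*} [MeasurableSpace X] [MeasurableSpace Y]
    {μ : Measure X} [IsProbabilityMeasure μ] {T : X → Y} (hT : AEMeasurable T μ) {S : Set Y}
    (hS : ∀ᵐ x ∂μ, T x ∈ S) : μ.map T S = 1 := by
  have := Measure.isProbabilityMeasure_map hT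
  refine one_le_prob_iff.mp ?_
  calc 1 = μ Set.univ := measure_univ.symm
    _ = μ (T ⁻¹' S) := (measure_congr (Filter.eventuallyEq_univ.mpr hS)).symm
    _ ≤ μ.map T S := Measure.le_map_apply hT S

section RadialBasis

variable {d J : ℕ} {D : Set (EuclideanSpace ℝ (Fin d))} (θ : Fin J → EuclideanSpace ℝ (Fin d))
  (lam : Fin J → ℝ)

theorem rbfParamMap_single_apply (s : Fin J) (y : closure D) :
    rbfParamMap d J D θ lam (Pi.single s 1) y =
      Real.exp (-‖(y : EuclideanSpace ℝ (Fin d)) - θ s‖ ^ 2 / (2 * lam s ^ 2)) := by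
  simp [rbfParamMap, Pi.single_apply]

theorem rbfParamMap_eq_sum_smul :
    rbfParamMap d J D θ lam =
      fun a => ∑ s, a s • rbfParamMap d J D θ lam (Pi.single s 1) := by
  funext a
  ext y
  simp only [BoundedContinuousFunction.coe_sum, BoundedContinuousFunction.coe_smul,
    Finset.sum_apply, rbfParamMap_single_apply, smul_eq_mul]
  rfl

end RadialBasis

theorem pushforward_rbf_level_set_null_general {ι E : Type*} [Fintype ι] [TopologicalSpace E]
    [MeasurableSpace E] [OpensMeasurableSpace E] (D : Set E)
    (μ : ι → Measure ℝ) [∀ i, IsProbabilityMeasure (μ i)] [∀ i, NullSingletonClass (μ i)]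
    (ν : Measure E) [SFinite ν] (f : ι → BoundedContinuousFunction (closure D) ℝ)
    (hf : ∀ᵐ y ∂ν.comap ((↑) : closure D → E), ∃ i, f i y ≠ 0) (c : ℝ) :
    letI : MeasurableSpace (BoundedContinuousFunction (closure D) ℝ) :=
      borel (BoundedContinuousFunction (closure D) ℝ)
    Measure.map (fun a : ι → ℝ => ∑ i, a i • f i) (Measure.pi μ)
      {φ : BoundedContinuousFunction (closure D) ℝ |
        ν (Subtype.val '' {y : closure D | (y : E) ∈ D ∧ φ y = c}) = 0} = 1 := by
  let : MeasurableSpace (BoundedContinuousFunction (closure D) ℝ) := borel _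
  have : BorelSpace (BoundedContinuousFunction (closure D) ℝ) := ⟨rfl⟩
  have hclosure : MeasurableSet (closure D) := isClosed_closure.measurableSet
  have := sFinite_comap_of_measurableEmbedding (.subtype_coe hclosure) ν
  have hT : Continuous fun a : ι → ℝ => ∑ i, a i • f i := by fun_prop
  refine map_apply_eq_one_of_ae_mem hT.measurable.aemeasurable ?_
  filter_upwards [ae_pi_ae_sum_mul_ne μ (fun i => (f i).continuous.measurable) hf c] with a ha
  rw [← comap_subtype_coe_apply hclosure]
  refine measure_mono_null (fun y ⟨_, hy⟩ => ?_) ha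
  simpa using hy

/-- **The pushforward prior puts full mass on level set functions with null `c`-level set.**
Let `μ₀` be the pushforward under `𝒯` of the standard Gaussian `N(0, I)` on `ℝ^J`.
Then `μ₀`-almost every `φ ∈ C(D̄)` satisfies `𝔪({x ∈ D : φ(x) = c}) = 0`. -/
theorem pushforward_rbf_level_set_null
    (d J : ℕ) (hJ : 0 < J)
    (D : Set (EuclideanSpace ℝ (Fin d)))
    (hD : Bornology.IsBounded D) (hDm : MeasurableSet D)
    (θ : Fin J → EuclideanSpace ℝ (Fin d))
    (lam : Fin J → ℝ) (hlam : ∀ s, 0 < lam s)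
    (c : ℝ) :
    letI : MeasurableSpace (BoundedContinuousFunction (closure D) ℝ) :=
      borel (BoundedContinuousFunction (closure D) ℝ)
    Measure.map (rbfParamMap d J D θ lam) (Measure.pi fun _ => gaussianReal 0 1)
      {φ : BoundedContinuousFunction (closure D) ℝ |
        volume (Subtype.val ''
          {y : closure D | (y : EuclideanSpace ℝ (Fin d)) ∈ D ∧ φ y = c}) = 0} = 1 := by
  have := nullSingletonClass_gaussianReal (μ := 0) one_ne_zero
  rw [rbfParamMap_eq_sum_smul]
  exact pushforward_rbf_level_set_null_general D _ _ _
    (ae_of_all _ fun y => ⟨⟨0, hJ⟩, by simp [rbfParamMap_single_apply]⟩) c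
end
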